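/- arXiv:2111.03771 — 2 statements merged into one kernel-verified Lean document; each statement's English description precedes it below -/
import Mathlib

section
/- Let n = 3 and d = 2, and set z₁ = a_{1,2} · Σ_{m=1}^{3} Σ_{p=1}^{3} a_{1,m} a_{m,3} a_{m,p} a_{p,1}² ∈ R (this is z(fern_{2,3}, μ) for the root-leaf labeling μ = (1,(2),(3),(1,1))). Then z₁² ∈ J_{2,3}; in particular z₁ lies in the radical of J_{2,3} but not in J_{2,3} itself. -/
/-!
Over a `ℚ`-algebra `K`, a point of the vanishing scheme of `J_{2,3}` is a matrix `A` over `K` whose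
map `x ↦ x - (A x)²` has Jacobian determinant `1`. For such `A` let `Δ` be its determinant and `Cᵢⱼ`
its cofactors. The linear coefficients of the Jacobian say that the diagonal of `A` is a left null
vector of `A`, hence is annihilated by `Δ`. Modulo these relations the coefficient of `x₃²` becomes
`C₃₁ C₃₂ = 0` and `z₁` becomes `a₁₂ a₃₁ C₃₁ C₁₂`. As `C₃₁ C₁₂` and `C₃₂ C₁₁` differ by `a₂₃ Δ`, it
follows that `z₁² = Δ (a₁₂ a₂₃ a₃₁)³`, which the coefficient of `x₁ x₂ x₃` forces to vanish.

That `z₁` itself need not vanish is seen on the circulant matrix with first row `(0, s, t)` over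
`ℚ[s, t] / (s t, s⁶ + t⁶)`, whose Jacobian determinant is `1` and for which `z₁ = s⁶ ≠ 0`.
-/

open MvPolynomial Matrix

noncomputable section

/-- `R` is the polynomial ring `ℚ[a_{i,j} : 1 ≤ i,j ≤ 3]`. -/
abbrev JacR3 : Type := MvPolynomial (Fin 3 × Fin 3) ℚ

/-- The `i`-th component of the degree `2`-linear map on 3 variables:
`f_i = x_i - (∑_j a_{i,j} x_j)²`. -/
def degLinMap23 (i : Fin 3) : MvPolynomial (Fin 3) JacR3 :=
  X i - (∑ j : Fin 3, C (X (i, j) : JacR3) * X j) ^ 2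

/-- The Jacobian `Jac(f) = det(D(f))` with `(D(f))_{i,j} = ∂f_i/∂x_j`. -/
def jacPoly23 : MvPolynomial (Fin 3) JacR3 :=
  (Matrix.of fun i j : Fin 3 => pderiv j (degLinMap23 i)).det

/-- The ideal `J_{2,3}` generated by the coefficients `J_α` of `Jac(f)` for all
nonzero multi-degrees `α`. -/
def Jideal23 : Ideal JacR3 :=
  Ideal.span {r : JacR3 | ∃ α : Fin 3 →₀ ℕ, α ≠ 0 ∧ coeff α jacPoly23 = r}

/-- `z₁ = a_{1,2} ∑_{m,p} a_{1,m} a_{m,3} a_{m,p} a_{p,1}²`, i.e.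
`z(fern_{2,3}, (1,(2),(3),(1,1)))`.  (Indices `1,2,3` are `0,1,2 : Fin 3`.) -/
def zOne : JacR3 :=
  (X (0, 1) : JacR3) *
    ∑ m : Fin 3, ∑ p : Fin 3, X (0, m) * X (m, 2) * X (m, p) * X (p, 0) ^ 2

section Matrix

variable {n K : Type*} [Fintype n] [DecidableEq n] [CommRing K]

theorem det_smul_eq_zero_of_vecMul_eq_zero {M : Matrix n n K} {v : n → K} (hv : v ᵥ* M = 0) :
    M.det • v = 0 := by
  simpa [vecMul_vecMul, mul_adjugate, vecMul_smul] using congrArg (· ᵥ* M.adjugate) hv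

theorem adjugate_apply_eq_det_updateCol (M : Matrix n n K) (i j : n) :
    M.adjugate i j = (M.updateCol i (Pi.single j 1)).det := by
  rw [← cramer_apply, cramer_eq_adjugate_mulVec, mulVec_single_one, col_apply]

theorem mul_adjugate_eq_of_vecMul_eq_zero {M : Matrix n n K} {v : n → K} (hv : v ᵥ* M = 0)
    (i j k : n) : v i * M.adjugate j k = v k * M.adjugate j i := by
  set B := M.updateCol j (Pi.single k 1) with hB
  have hvB : v ᵥ* B = Pi.single j (v k) := by
    rw [hB, vecMul_updateCol, hv, dotProduct_single_one]
    rfl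
  have hdet : B.det = M.adjugate j k := (adjugate_apply_eq_det_updateCol M j k).symm
  have hadj : B.adjugate j i = M.adjugate j i := by
    rw [adjugate_apply_eq_det_updateCol, adjugate_apply_eq_det_updateCol, hB, updateCol_idem]
  calc v i * M.adjugate j k = (v ᵥ* (B * B.adjugate)) i := by
        rw [mul_adjugate, vecMul_smul, vecMul_one, Pi.smul_apply, smul_eq_mul, hdet, mul_comm]
    _ = v k * M.adjugate j i := by
        rw [← vecMul_vecMul, hvB, single_vecMul, Pi.smul_apply, row_apply, hadj, smul_eq_mul]

theorem adjugate_mul_adjugate_sub_fin_three (A : Matrix (Fin 3) (Fin 3) K) :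
    A.adjugate 0 2 * A.adjugate 1 0 - A.adjugate 0 0 * A.adjugate 1 2 = A.det * A 1 2 := by
  simp only [adjugate_fin_three, det_fin_three, of_apply, cons_val]
  ring

theorem permanent_fin_three (A : Matrix (Fin 3) (Fin 3) K) :
    A.permanent = A 0 0 * A 1 1 * A 2 2 + A 0 0 * A 1 2 * A 2 1 + A 0 1 * A 1 0 * A 2 2
      + A 0 1 * A 1 2 * A 2 0 + A 0 2 * A 1 0 * A 2 1 + A 0 2 * A 1 1 * A 2 0 := by
  have huniv : (Finset.univ : Finset (Equiv.Perm (Fin 3))) =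
      {1, Equiv.swap 1 2, Equiv.swap 0 1, finRotate 3, (finRotate 3)⁻¹, Equiv.swap 0 2} := by
    decide
  have hneg : (-1 : Fin 3) = 2 := rfl
  rw [permanent, huniv]
  repeat rw [Finset.sum_insert (by decide)]
  simp only [Finset.sum_singleton, Fin.prod_univ_three, Equiv.Perm.coe_one, id_eq, ne_eq,
    not_false_eq_true, zero_ne_one, one_ne_zero, Fin.reduceEq, Equiv.swap_apply_of_ne_of_ne,
    Equiv.swap_apply_left, Equiv.swap_apply_right, finRotate_apply, Equiv.Perm.coe_inv,
    finRotate_symm_apply, zero_add, Fin.reduceAdd, zero_sub, hneg, sub_self, Fin.reduceSub]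
  ring

end Matrix

section Coefficients

variable {n K : Type*} [Fintype n]

theorem surjective_of_sum_single_eq {p : n → n}
    (hp : ∑ i, Finsupp.single (p i) 1 = ∑ i, (Finsupp.single i 1 : n →₀ ℕ)) :
    Function.Surjective p := by
  classical
  intro j
  by_contra! h
  simpa [Finsupp.finsetSum_apply, Finsupp.single_apply, h] using DFunLike.congr_fun hp j

theorem pderiv_toMvPolynomial {m : Type*} [CommSemiring K] (A : Matrix m n K) (i : m) (j : n) :
    pderiv j (A.toMvPolynomial i) = C (A i j) := by
  classical
  simp [toMvPolynomial, ← C_mul_X_eq_monomial, pderiv_X, Pi.single_apply]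

theorem coeff_single_of_isHomogeneous {σ : Type*} [DecidableEq σ] [CommSemiring K]
    {p : MvPolynomial σ K} {d : ℕ} (hp : p.IsHomogeneous d) (k : σ) :
    coeff (Finsupp.single k d) p = eval (Pi.single k 1) p := by
  rw [eval_eq, Finset.sum_eq_single (Finsupp.single k d)]
  · rw [Finset.prod_eq_one, mul_one]
    intro i hi
    obtain rfl : i = k := Finset.mem_singleton.mp (Finsupp.support_single_subset hi)
    rw [Pi.single_eq_same, one_pow]
  · intro m hm hmk
    obtain ⟨i, hik, hi⟩ : ∃ i ≠ k, m i ≠ 0 := by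
      by_contra! h
      have hdeg : m.degree = d := of_not_not fun hd =>
        mem_support_iff.mp hm (hp.coeff_eq_zero hd)
      obtain ⟨a, rfl⟩ := Finsupp.support_subset_singleton'.mp fun i hi =>
        Finset.mem_singleton.mpr (of_not_not fun hik => Finsupp.mem_support_iff.mp hi (h i hik))
      rw [Finsupp.degree_single] at hdeg
      exact hmk (by rw [hdeg])
    rw [Finset.prod_eq_zero (Finsupp.mem_support_iff.mpr hi), mul_zero]
    rw [Pi.single_eq_of_ne hik, zero_pow hi]
  · intro hd
    rw [notMem_support_iff.mp hd, zero_mul]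

theorem coeff_prod_toMvPolynomial_eq_permanent [DecidableEq n] [CommSemiring K]
    (A : Matrix n n K) :
    coeff (∑ i, Finsupp.single i 1) (∏ i, A.toMvPolynomial i) = A.permanent := by
  have hprod : ∏ i, A.toMvPolynomial i =
      ∑ p : n → n, monomial (∑ i, Finsupp.single (p i) 1) (∏ i, A i (p i)) := by
    simp only [toMvPolynomial, Fintype.prod_sum, monomial_sum_prod]
  rw [hprod, coeff_sum, ← permanent_transpose, permanent]
  refine (Finset.sum_of_injOn (fun σ : Equiv.Perm n => ⇑σ) DFunLike.coe_injective.injOn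
    (fun _ _ => Finset.mem_univ _) (fun p _ hp => ?_) fun σ _ => ?_).symm
  · refine coeff_monomial _ _ _ |>.trans (if_neg fun h => hp ?_)
    exact ⟨Equiv.ofBijective p (surjective_of_sum_single_eq h).bijective_of_finite, by simp⟩
  · simp [Equiv.sum_comp σ fun i => Finsupp.single i 1]

end Coefficients

section Jacobian

variable {n K L : Type*} [Fintype n] [DecidableEq n] [CommRing K] [CommRing L]

/-- The Jacobian determinant of the degree `2`-linear map `xᵢ ↦ xᵢ - (∑ⱼ Aᵢⱼ xⱼ)²` with an
arbitrary coefficient matrix `A`; `jacPoly23` is the case of the generic `3 × 3` matrix. -/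
def jacobianPoly (A : Matrix n n K) : MvPolynomial n K :=
  (Matrix.of fun i j => pderiv j (X i - A.toMvPolynomial i ^ 2)).det

theorem jacobianPoly_eq_det (A : Matrix n n K) :
    jacobianPoly A = (1 - diagonal (fun i => 2 * A.toMvPolynomial i) * A.map C).det := by
  unfold jacobianPoly
  congr 1
  ext1 i j
  simp [pderiv_toMvPolynomial, pderiv_X, Pi.single_apply, Matrix.one_apply, eq_comm (a := i),
    mul_assoc]

theorem map_jacobianPoly (φ : K →+* L) (A : Matrix n n K) :
    map φ (jacobianPoly A) = jacobianPoly (A.map φ) := by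
  simp only [jacobianPoly, RingHom.map_det, RingHom.mapMatrix_apply]
  congr 1
  ext1 i j
  simp [toMvPolynomial_map, ← pderiv_map, pderiv_X, Pi.single_apply, apply_ite]

theorem constantCoeff_jacobianPoly (A : Matrix n n K) : constantCoeff (jacobianPoly A) = 1 := by
  rw [jacobianPoly_eq_det, RingHom.map_det, map_sub, map_one, map_mul]
  have : constantCoeff.mapMatrix (diagonal fun i => 2 * A.toMvPolynomial i) = 0 := by
    ext i j
    simp [diagonal_apply, apply_ite]
  rw [this, zero_mul, sub_zero, det_one]

theorem jacobianPoly_eq_one_iff {A : Matrix n n K} :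
    jacobianPoly A = 1 ↔ ∀ α ≠ 0, coeff α (jacobianPoly A) = 0 := by
  refine ⟨fun h α hα => by rw [h, coeff_one, if_neg hα.symm], fun h => ?_⟩
  ext α
  rcases eq_or_ne α 0 with rfl | hα
  · rw [← constantCoeff_eq, constantCoeff_jacobianPoly, map_one]
  · rw [h α hα, coeff_one, if_neg hα.symm]

end Jacobian

section FinThree

variable {K : Type*} [CommRing K] (A : Matrix (Fin 3) (Fin 3) K)

/-- The sum of `a · (A x)ᵢ` over the `1 × 1` principal minors `a` of `A`; up to the factor `-2` the
linear part of `jacobianPoly A`. -/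
def jacobianLinearPart : MvPolynomial (Fin 3) K :=
  ∑ i, C (A i i) * A.toMvPolynomial i

/-- The sum of `m · (A x)ᵢ (A x)ⱼ` over the `2 × 2` principal minors `m` of `A`, each written as the
diagonal entry of the adjugate at the complementary index; up to the factor `4` the quadratic part
of `jacobianPoly A`. -/
def jacobianQuadraticPart : MvPolynomial (Fin 3) K :=
  ∑ i, C (A.adjugate i i) * (A.toMvPolynomial (i + 1) * A.toMvPolynomial (i + 2))

/-- The product of `det A` and all `(A x)ᵢ`; up to the factor `-8` the cubic part of
`jacobianPoly A`. -/
def jacobianCubicPart : MvPolynomial (Fin 3) K :=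
  C A.det * ∏ i, A.toMvPolynomial i

theorem isHomogeneous_jacobianLinearPart : (jacobianLinearPart A).IsHomogeneous 1 :=
  IsHomogeneous.sum _ _ _ fun i _ => (A.toMvPolynomial_isHomogeneous i).C_mul _

theorem isHomogeneous_jacobianQuadraticPart : (jacobianQuadraticPart A).IsHomogeneous 2 :=
  IsHomogeneous.sum _ _ _ fun i _ => ((A.toMvPolynomial_isHomogeneous (i + 1)).mul
    (A.toMvPolynomial_isHomogeneous (i + 2))).C_mul _

theorem isHomogeneous_jacobianCubicPart : (jacobianCubicPart A).IsHomogeneous 3 :=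
  (IsHomogeneous.prod Finset.univ _ (fun _ => 1) fun i _ =>
    A.toMvPolynomial_isHomogeneous i).C_mul _

theorem jacobianPoly_eq_sum_parts :
    jacobianPoly A = 1 - C 2 * jacobianLinearPart A + C 4 * jacobianQuadraticPart A
      - C 8 * jacobianCubicPart A := by
  rw [jacobianPoly_eq_det]
  simp only [jacobianLinearPart, jacobianQuadraticPart, jacobianCubicPart, Fin.sum_univ_three,
    Fin.prod_univ_three, det_fin_three, adjugate_fin_three, of_apply, cons_val, Matrix.sub_apply,
    diagonal_mul, map_apply, one_apply_eq, ne_eq, Fin.reduceEq, zero_ne_one, one_ne_zero,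
    not_false_eq_true, one_apply_ne, zero_add, Fin.reduceAdd, map_ofNat, C_add, C_sub, C_mul]
  ring

theorem coeff_jacobianPoly_of_degree_eq_one {α : Fin 3 →₀ ℕ} (hα : α.degree = 1) :
    coeff α (jacobianPoly A) = -2 * coeff α (jacobianLinearPart A) := by
  have h0 : α ≠ 0 := by rintro rfl; simp at hα
  simp [jacobianPoly_eq_sum_parts, coeff_C_mul, coeff_one, h0.symm,
    (isHomogeneous_jacobianQuadraticPart A).coeff_eq_zero (d := α) (by lia),
    (isHomogeneous_jacobianCubicPart A).coeff_eq_zero (d := α) (by lia)]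

theorem coeff_jacobianPoly_of_degree_eq_two {α : Fin 3 →₀ ℕ} (hα : α.degree = 2) :
    coeff α (jacobianPoly A) = 4 * coeff α (jacobianQuadraticPart A) := by
  have h0 : α ≠ 0 := by rintro rfl; simp at hα
  simp [jacobianPoly_eq_sum_parts, coeff_C_mul, coeff_one, h0.symm,
    (isHomogeneous_jacobianLinearPart A).coeff_eq_zero (d := α) (by lia),
    (isHomogeneous_jacobianCubicPart A).coeff_eq_zero (d := α) (by lia)]

theorem coeff_jacobianPoly_of_degree_eq_three {α : Fin 3 →₀ ℕ} (hα : α.degree = 3) :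
    coeff α (jacobianPoly A) = -8 * coeff α (jacobianCubicPart A) := by
  have h0 : α ≠ 0 := by rintro rfl; simp at hα
  simp [jacobianPoly_eq_sum_parts, coeff_C_mul, coeff_one, h0.symm,
    (isHomogeneous_jacobianLinearPart A).coeff_eq_zero (d := α) (by lia),
    (isHomogeneous_jacobianQuadraticPart A).coeff_eq_zero (d := α) (by lia)]

variable {A}

theorem diag_vecMul_eq_zero_of_jacobianPoly_eq_one (h2 : IsUnit (2 : K))
    (hA : jacobianPoly A = 1) : A.diag ᵥ* A = 0 := by
  ext k
  have h := coeff_jacobianPoly_of_degree_eq_one A (Finsupp.degree_single k 1)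
  rw [jacobianPoly_eq_one_iff.mp hA _ (by simp),
    coeff_single_of_isHomogeneous (isHomogeneous_jacobianLinearPart A)] at h
  have hk : eval (Pi.single k 1) (jacobianLinearPart A) = 0 := h2.neg.mul_right_eq_zero.mp h.symm
  simpa [jacobianLinearPart, toMvPolynomial_eval_eq_apply, vecMul, dotProduct] using hk

theorem sum_adjugate_mul_eq_zero_of_jacobianPoly_eq_one (h2 : IsUnit (2 : K))
    (hA : jacobianPoly A = 1) (k : Fin 3) :
    ∑ i, A.adjugate i i * (A (i + 1) k * A (i + 2) k) = 0 := by
  have h := coeff_jacobianPoly_of_degree_eq_two A (Finsupp.degree_single k 2)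
  rw [jacobianPoly_eq_one_iff.mp hA _ (by simp),
    coeff_single_of_isHomogeneous (isHomogeneous_jacobianQuadraticPart A)] at h
  have h4 : IsUnit (4 : K) := by simpa [show (4 : K) = 2 * 2 by norm_num] using h2
  have hk : eval (Pi.single k 1) (jacobianQuadraticPart A) = 0 :=
    h4.mul_right_eq_zero.mp h.symm
  simpa [jacobianQuadraticPart, toMvPolynomial_eval_eq_apply] using hk

theorem det_mul_permanent_eq_zero_of_jacobianPoly_eq_one (h2 : IsUnit (2 : K))
    (hA : jacobianPoly A = 1) : A.det * A.permanent = 0 := by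
  have hdeg : (∑ i : Fin 3, Finsupp.single i 1).degree = 3 := by simp [map_sum]
  have h := coeff_jacobianPoly_of_degree_eq_three A hdeg
  rw [jacobianPoly_eq_one_iff.mp hA _ (by rintro h0; simp [h0] at hdeg), jacobianCubicPart,
    coeff_C_mul, coeff_prod_toMvPolynomial_eq_permanent] at h
  have h8 : IsUnit (-8 : K) := by
    simpa [show (8 : K) = 2 * (2 * 2) by norm_num] using h2
  exact h8.mul_right_eq_zero.mp h.symm

end FinThree

section Fern

variable {K L : Type*} [CommRing K] [CommRing L] {A : Matrix (Fin 3) (Fin 3) K}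

/-- The polynomial `z₁ = z(fern_{2,3}, (1,(2),(3),(1,1)))` evaluated at an arbitrary matrix of
coefficients; `zOne` is its value at the generic matrix. -/
def fernValue (A : Matrix (Fin 3) (Fin 3) K) : K :=
  A 0 1 * ∑ m, ∑ p, A 0 m * A m 2 * A m p * A p 0 ^ 2

theorem map_fernValue (φ : K →+* L) (A : Matrix (Fin 3) (Fin 3) K) :
    φ (fernValue A) = fernValue (A.map φ) := by
  simp [fernValue, map_sum]

theorem adjugate_zero_two_mul_adjugate_one_two_eq_zero (hdiag : A.diag ᵥ* A = 0)
    (hminor : ∑ i, A.adjugate i i * (A (i + 1) 2 * A (i + 2) 2) = 0) :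
    A.adjugate 0 2 * A.adjugate 1 2 = 0 := by
  have h0 : A 2 2 * A.adjugate 0 0 = A 0 0 * A.adjugate 0 2 :=
    mul_adjugate_eq_of_vecMul_eq_zero hdiag 2 0 0
  have h1 : A 2 2 * A.adjugate 1 1 = A 1 1 * A.adjugate 1 2 :=
    mul_adjugate_eq_of_vecMul_eq_zero hdiag 2 1 1
  have hrow : A 1 0 * A.adjugate 0 2 + A 1 1 * A.adjugate 1 2 + A 1 2 * A.adjugate 2 2 = 0 := by
    simpa [mul_apply, Fin.sum_univ_three] using congrFun (congrFun A.mul_adjugate 1) 2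
  have hadj : A.adjugate 1 2 = A 0 2 * A 1 0 - A 0 0 * A 1 2 := by
    simp only [adjugate_fin_three, of_apply, cons_val]
    ring
  simp only [Fin.sum_univ_three, zero_add, Fin.reduceAdd] at hminor
  linear_combination A.adjugate 0 2 * hadj - hminor + A 1 2 * h0 + A 0 2 * h1 + A 0 2 * hrow

theorem fernValue_eq_of_diag_vecMul_eq_zero (hdiag : A.diag ᵥ* A = 0) :
    fernValue A = A 0 1 * A 2 0 * (A.adjugate 0 2 * A.adjugate 1 0) := by
  set s : Fin 3 → K := A *ᵥ fun p => A p 0 ^ 2 with hs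
  have hs_diag : A 0 0 * s 0 + A 1 1 * s 1 + A 2 2 * s 2 = 0 := by
    have : A.diag ⬝ᵥ s = 0 := by rw [hs, dotProduct_mulVec, hdiag, zero_dotProduct]
    simpa [dotProduct, Fin.sum_univ_three] using this
  have hs_one : s 1 = A 2 0 * A.adjugate 1 0 := by
    have h0 := congrFun hdiag 0
    simp only [vecMul, dotProduct, diag_apply, Fin.sum_univ_three, Pi.zero_apply] at h0
    simp only [hs, mulVec, dotProduct, Fin.sum_univ_three, adjugate_fin_three, of_apply, cons_val]
    linear_combination A 1 0 * h0
  have hadj : A.adjugate 0 2 = A 0 1 * A 1 2 - A 0 2 * A 1 1 := by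
    simp [adjugate_fin_three]
  calc fernValue A = A 0 1 * ∑ m, A 0 m * A m 2 * s m := by
        simp only [fernValue, hs, mulVec, dotProduct, Finset.mul_sum, mul_assoc]
    _ = A 0 1 * (A.adjugate 0 2 * s 1) := by
        rw [Fin.sum_univ_three, hadj]
        linear_combination A 0 1 * A 0 2 * hs_diag
    _ = A 0 1 * A 2 0 * (A.adjugate 0 2 * A.adjugate 1 0) := by rw [hs_one]; ring

theorem fernValue_sq_eq (hdiag : A.diag ᵥ* A = 0) (hadj : A.adjugate 0 2 * A.adjugate 1 2 = 0) :
    fernValue A ^ 2 = A.det * (A 0 1 * A 1 2 * A 2 0) ^ 3 := by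
  have hdet (i : Fin 3) : A.det * A i i = 0 :=
    congrFun (det_smul_eq_zero_of_vecMul_eq_zero hdiag) i
  have hdet02 : A.det * A.adjugate 0 2 = A.det * (A 0 1 * A 1 2) := by
    simp only [adjugate_fin_three, of_apply, cons_val]
    linear_combination -A 0 2 * hdet 1
  have hdet10 : A.det * A.adjugate 1 0 = A.det * (A 1 2 * A 2 0) := by
    simp only [adjugate_fin_three, of_apply, cons_val]
    linear_combination -A 1 0 * hdet 2
  calc fernValue A ^ 2
      = (A 0 1 * A 2 0) ^ 2 * (A.adjugate 0 2 * A.adjugate 1 0) *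
          (A.adjugate 0 2 * A.adjugate 1 0) := by
        rw [fernValue_eq_of_diag_vecMul_eq_zero hdiag]; ring
    _ = (A 0 1 * A 2 0) ^ 2 * A 1 2 * (A.det * A.adjugate 0 2) * A.adjugate 1 0 := by
        linear_combination (A 0 1 * A 2 0) ^ 2 * A.adjugate 0 2 * A.adjugate 1 0 *
          adjugate_mul_adjugate_sub_fin_three A
          + (A 0 1 * A 2 0) ^ 2 * A.adjugate 1 0 * A.adjugate 0 0 * hadj
    _ = (A 0 1 * A 2 0) ^ 2 * A 1 2 * (A 0 1 * A 1 2) * (A.det * A.adjugate 1 0) := by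
        rw [hdet02]; ring
    _ = A.det * (A 0 1 * A 1 2 * A 2 0) ^ 3 := by rw [hdet10]; ring

theorem det_mul_pow_three_eq_zero (hdiag : A.diag ᵥ* A = 0)
    (hadj : A.adjugate 0 2 * A.adjugate 1 2 = 0) (hperm : A.det * A.permanent = 0) :
    A.det * (A 0 1 * A 1 2 * A 2 0) ^ 3 = 0 := by
  have hdet (i : Fin 3) : A.det * A i i = 0 :=
    congrFun (det_smul_eq_zero_of_vecMul_eq_zero hdiag) i
  have hcycles : A.det * (A 0 1 * A 1 2 * A 2 0) = -(A.det * (A 0 2 * A 1 0 * A 2 1)) := by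
    rw [permanent_fin_three] at hperm
    linear_combination hperm - (A 1 1 * A 2 2 + A 1 2 * A 2 1) * hdet 0 -
      A 0 2 * A 2 0 * hdet 1 - A 0 1 * A 1 0 * hdet 2
  have hrows : A.det * (A 0 1 * A 1 2 * (A 0 2 * A 1 0)) = 0 := by
    simp only [adjugate_fin_three, of_apply, cons_val] at hadj
    linear_combination A.det * hadj + A 0 1 * A 1 2 * A 1 2 * hdet 0
      + A 0 2 * (A 0 2 * A 1 0 - A 0 0 * A 1 2) * hdet 1
  calc A.det * (A 0 1 * A 1 2 * A 2 0) ^ 3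
      = (A 0 1 * A 1 2 * A 2 0) ^ 2 * (A.det * (A 0 1 * A 1 2 * A 2 0)) := by ring
    _ = -(A 0 1 * A 1 2 * A 2 0 ^ 2 * A 2 1 * (A.det * (A 0 1 * A 1 2 * (A 0 2 * A 1 0)))) := by
        rw [hcycles]; ring
    _ = 0 := by rw [hrows, mul_zero, neg_zero]

theorem fernValue_sq_eq_zero (h2 : IsUnit (2 : K)) (hA : jacobianPoly A = 1) :
    fernValue A ^ 2 = 0 := by
  have hdiag := diag_vecMul_eq_zero_of_jacobianPoly_eq_one h2 hA
  have hadj := adjugate_zero_two_mul_adjugate_one_two_eq_zero hdiag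
    (sum_adjugate_mul_eq_zero_of_jacobianPoly_eq_one h2 hA 2)
  rw [fernValue_sq_eq hdiag hadj]
  exact det_mul_pow_three_eq_zero hdiag hadj
    (det_mul_permanent_eq_zero_of_jacobianPoly_eq_one h2 hA)

end Fern

section Circulant

variable {K : Type*} [CommRing K]

theorem jacobianPoly_circulant_eq_one {s t : K} (hst : s * t = 0) (h6 : s ^ 6 + t ^ 6 = 0) :
    jacobianPoly !![0, s, t; t, 0, s; s, t, 0] = 1 := by
  set A := !![0, s, t; t, 0, s; s, t, 0] with hA
  have hlinear : jacobianLinearPart A = 0 := by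
    simp [jacobianLinearPart, hA, Fin.sum_univ_three]
  have hquadratic : jacobianQuadraticPart A = 0 := by
    simp [jacobianQuadraticPart, hA, adjugate_fin_three, Fin.sum_univ_three, hst, mul_comm t s]
  have hdet : A.det = s ^ 3 + t ^ 3 := by
    simp only [hA, det_fin_three, of_apply, cons_val]
    ring
  have hC : (C s * C t : MvPolynomial (Fin 3) K) = 0 := by rw [← C_mul, hst, C_0]
  have hprod : ∏ i, A.toMvPolynomial i = C (s ^ 3 + t ^ 3) * (X 0 * X 1 * X 2) := by
    simp only [hA, toMvPolynomial, ← C_mul_X_eq_monomial, Fin.sum_univ_three, Fin.prod_univ_three,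
      of_apply, cons_val, C_0, C_add, C_pow]
    linear_combination (C s * (X 0 ^ 2 * X 1 + X 1 ^ 2 * X 2 + X 0 * X 2 ^ 2) +
      C t * (X 0 * X 1 ^ 2 + X 0 ^ 2 * X 2 + X 1 * X 2 ^ 2)) * hC
  have hcubic : jacobianCubicPart A = 0 := by
    have hsq : (s ^ 3 + t ^ 3) * (s ^ 3 + t ^ 3) = 0 := by
      linear_combination h6 + 2 * s ^ 2 * t ^ 2 * hst
    rw [jacobianCubicPart, hdet, hprod, ← mul_assoc, ← C_mul, hsq, C_0, zero_mul]
  rw [jacobianPoly_eq_sum_parts, hlinear, hquadratic, hcubic]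
  ring

theorem fernValue_circulant (s t : K) : fernValue !![0, s, t; t, 0, s; s, t, 0] = s ^ 6 := by
  simp only [fernValue, Fin.sum_univ_three, of_apply, cons_val]
  ring

theorem X_pow_notMem_span {σ : Type*} [Nontrivial K] {i j : σ} (hij : i ≠ j) {d : ℕ}
    (hd : d ≠ 0) :
    (X i ^ d : MvPolynomial σ K) ∉ Ideal.span {X i * X j, X i ^ d + X j ^ d} := by
  classical
  intro h
  obtain ⟨p, q, hpq⟩ := Ideal.mem_span_pair.mp h
  have hne : Finsupp.single i d ≠ Finsupp.single j d := by
    simp [Finsupp.single_left_inj hd, hij]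
  have hi : coeff 0 q = 1 := by
    simpa [← mul_assoc, coeff_mul_X', mul_add, X_pow_eq_monomial, coeff_mul_monomial', hij,
      hij.symm, hd] using congrArg (coeff (Finsupp.single i d)) hpq
  have hj : coeff 0 q = 0 := by
    simpa [← mul_assoc, coeff_mul_X', mul_add, X_pow_eq_monomial, coeff_mul_monomial', hij,
      hij.symm, hd, hne] using congrArg (coeff (Finsupp.single j d)) hpq
  exact one_ne_zero (hi.symm.trans hj)

end Circulant

section Generic

variable {K : Type*} [CommRing K]

theorem jacPoly23_eq_jacobianPoly :
    jacPoly23 = jacobianPoly (mvPolynomialX (Fin 3) (Fin 3) ℚ) := by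
  simp [jacPoly23, jacobianPoly, degLinMap23, toMvPolynomial, C_mul_X_eq_monomial]

theorem zOne_eq_fernValue : zOne = fernValue (mvPolynomialX (Fin 3) (Fin 3) ℚ) := rfl

theorem Jideal23_le_ker_iff (φ : JacR3 →+* K) :
    Jideal23 ≤ RingHom.ker φ ↔ jacobianPoly ((mvPolynomialX (Fin 3) (Fin 3) ℚ).map φ) = 1 := by
  rw [jacobianPoly_eq_one_iff, ← map_jacobianPoly, ← jacPoly23_eq_jacobianPoly]
  simp [Jideal23, Ideal.span_le, Set.subset_def, coeff_map]

theorem zOne_sq_mem_Jideal23 : zOne ^ 2 ∈ Jideal23 := by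
  have hjac := (Jideal23_le_ker_iff (Ideal.Quotient.mk Jideal23)).mp Ideal.mk_ker.ge
  have h2 : IsUnit (2 : JacR3 ⧸ Jideal23) := by
    have := (IsUnit.mk0 (2 : ℚ) two_ne_zero).map (algebraMap ℚ (JacR3 ⧸ Jideal23))
    rwa [map_ofNat] at this
  rw [← Ideal.Quotient.eq_zero_iff_mem, map_pow, zOne_eq_fernValue, map_fernValue]
  exact fernValue_sq_eq_zero h2 hjac

theorem zOne_notMem_Jideal23 : zOne ∉ Jideal23 := by
  set I : Ideal (MvPolynomial (Fin 2) ℚ) := Ideal.span {X 0 * X 1, X 0 ^ 6 + X 1 ^ 6}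
  set s := Ideal.Quotient.mk I (X 0)
  set t := Ideal.Quotient.mk I (X 1)
  have hst : s * t = 0 :=
    Ideal.Quotient.eq_zero_iff_mem.mpr (Ideal.subset_span (Set.mem_insert _ _))
  have h6 : s ^ 6 + t ^ 6 = 0 :=
    Ideal.Quotient.eq_zero_iff_mem.mpr (Ideal.subset_span (Set.mem_insert_of_mem _ rfl))
  set A := !![0, s, t; t, 0, s; s, t, 0] with hA
  set φ : JacR3 →+* MvPolynomial (Fin 2) ℚ ⧸ I := (aeval fun p => A p.1 p.2).toRingHom
  have hφ : (mvPolynomialX (Fin 3) (Fin 3) ℚ).map φ = A := mvPolynomialX_mapMatrix_aeval ℚ A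
  have hker : Jideal23 ≤ RingHom.ker φ :=
    (Jideal23_le_ker_iff φ).mpr (hφ ▸ jacobianPoly_circulant_eq_one hst h6)
  intro hz
  have hs : s ^ 6 = 0 := by
    rw [← fernValue_circulant s t, ← hA, ← hφ, ← map_fernValue, ← zOne_eq_fernValue]
    exact hker hz
  exact X_pow_notMem_span Fin.zero_ne_one (by norm_num) (Ideal.Quotient.eq_zero_iff_mem.mp hs)

end Generic

/-- `z₁² ∈ J_{2,3}`; in particular `z₁` lies in the radical of `J_{2,3}`
but not in `J_{2,3}` itself. -/
theorem stmt14 : zOne ^ 2 ∈ Jideal23 ∧ zOne ∈ Jideal23.radical ∧ zOne ∉ Jideal23 := by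
  exact ⟨zOne_sq_mem_Jideal23, ⟨2, zOne_sq_mem_Jideal23⟩, zOne_notMem_Jideal23⟩
end
end

section
/- Let n = 3 and d = 3, and set w₁ = a_{1,2}² · Σ_{m=1}^{3} Σ_{p=1}^{3} a_{1,m} a_{m,3}² a_{m,p} a_{p,1}³ ∈ R (this is z(fern_{3,3}, μ) for the root-leaf labeling μ = (1,(2,2),(3,3),(1,1,1))). Then w₁² ∈ J_{3,3}; in particular w₁ lies in the radical of J_{3,3}. -/
open MvPolynomial Matrix

noncomputable section

/-- The `i`-th component of the degree `3`-linear map on 3 variables: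
`f_i = x_i - (∑_j a_{i,j} x_j)³`. -/
def degLinMap33 (i : Fin 3) : MvPolynomial (Fin 3) JacR3 :=
  X i - (∑ j : Fin 3, C (X (i, j) : JacR3) * X j) ^ 3

/-- The Jacobian `Jac(f) = det(D(f))` with `(D(f))_{i,j} = ∂f_i/∂x_j`. -/
def jacPoly33 : MvPolynomial (Fin 3) JacR3 :=
  (Matrix.of fun i j : Fin 3 => pderiv j (degLinMap33 i)).det

/-- The ideal `J_{3,3}` generated by the coefficients `J_α` of `Jac(f)` for all
nonzero multi-degrees `α`. -/
def Jideal33 : Ideal JacR3 :=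
  Ideal.span {r : JacR3 | ∃ α : Fin 3 →₀ ℕ, α ≠ 0 ∧ coeff α jacPoly33 = r}

/-- `w₁ = a_{1,2}² ∑_{m,p} a_{1,m} a_{m,3}² a_{m,p} a_{p,1}³`, i.e.
`z(fern_{3,3}, (1,(2,2),(3,3),(1,1,1)))`.  (Indices `1,2,3` are `0,1,2 : Fin 3`.) -/
def wOne : JacR3 :=
  (X (0, 1) : JacR3) ^ 2 *
    ∑ m : Fin 3, ∑ p : Fin 3, X (0, m) * X (m, 2) ^ 2 * X (m, p) * X (p, 0) ^ 3

/-!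
Calculate modulo the ideal of the nonconstant coefficients, where `Jac(f)` is constant. With `u_i`
the linear form of the `i`-th row of the matrix `A = (a b c; d e f; g h k)`, the components of
degree 2, 4 and 6 of `Jac(f)` say that `∑ a_{ii} u_i²`, `∑_{i<j} M_{ij} u_i² u_j²` and
`det A · u_1² u_2² u_3²` vanish, the `M_{ij}` being the principal minors. The first one means
`Aᵀ diag(A) A = 0`, and multiplying by the adjugate gives `det A · a_{ii} a_{ij} = 0`: in the
presence of `det A` only the off-diagonal parts of the rows matter.

Write `w₁ = b² S`. Modulo the relations, `S = 3γ + det A · f² g²`, where `γ` is the same sum as `S`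
with other leaf weights. Here `g γ = 0` and `d² γ = 0`, while `γ` is a combination of `d²` and `g`;
so `γ² = 0` and `w₁² = (det A)² p⁴` with `p = b f g`. If `q = c d h`, the off-diagonal parts of the
relations of degree 4 and 6 give `det A · p² q = det A · p q² = det A · (p² + 8 p q + q²) = 0`, so
that `det A · p³ = 0`.
-/

namespace PowerLinear

section General

variable {n R S : Type*} [Fintype n] [CommRing R] [CommRing S]

/-- The linear form `∑ⱼ vⱼ xⱼ` with coefficient vector `v`. -/
def linForm (v : n → R) : MvPolynomial n R := ∑ j, C (v j) * X j

theorem isHomogeneous_linForm (v : n → R) : (linForm v).IsHomogeneous 1 :=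
  .sum _ _ _ fun _ _ => isHomogeneous_C_mul_X _ _

theorem map_linForm (φ : R →+* S) (v : n → R) : map φ (linForm v) = linForm (φ ∘ v) := by
  simp [linForm]

/-- The degree `d`-linear map `fᵢ = xᵢ - (∑ⱼ aᵢⱼ xⱼ)ᵈ` with coefficient matrix `A`. -/
def powerLinearMap (d : ℕ) (A : Matrix n n R) (i : n) : MvPolynomial n R :=
  X i - linForm (A i) ^ d

theorem map_powerLinearMap (φ : R →+* S) (d : ℕ) (A : Matrix n n R) (i : n) :
    map φ (powerLinearMap d A i) = powerLinearMap d (A.map φ) i := by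
  simp only [powerLinearMap, map_sub, map_X, map_pow, map_linForm]
  rfl

theorem pderiv_linForm (v : n → R) (j : n) : pderiv j (linForm v) = C (v j) := by
  classical
  simp [linForm, pderiv_X, Pi.single_apply]

theorem sum_mul_mul_eq_zero_of_sum_sq_eq_zero (h2 : IsUnit (2 : R)) {A : Matrix n n R} {c : n → R}
    (h : ∑ i, C (c i) * linForm (A i) ^ 2 = 0) (j k : n) : ∑ i, c i * A i j * A i k = 0 := by
  have hjk := congrArg (fun p => constantCoeff (pderiv j (pderiv k p))) h
  simp only [pow_two, map_sum, Derivation.leibniz, pderiv_C, pderiv_linForm, smul_eq_mul, map_add,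
    map_mul, mul_zero, add_zero, zero_add, constantCoeff_C, map_zero] at hjk
  rw [← h2.mul_right_eq_zero, ← hjk, Finset.mul_sum]
  exact Finset.sum_congr rfl fun i _ => by ring

theorem coeff_linForm_mul (v : n → R) (p : MvPolynomial n R) (α : n →₀ ℕ) :
    coeff α (linForm v * p) =
      ∑ j, if α j = 0 then 0 else v j * coeff (α - Finsupp.single j 1) p := by
  classical
  simp only [linForm, Finset.sum_mul, mul_assoc, coeff_sum, coeff_C_mul, coeff_X_mul',
    Finsupp.mem_support_iff, ne_eq, ite_not, mul_ite, mul_zero]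

variable [DecidableEq n]

theorem pderiv_powerLinearMap (d : ℕ) (A : Matrix n n R) (i j : n) :
    pderiv j (powerLinearMap d A i) =
      (if i = j then 1 else 0) -
        (d : MvPolynomial n R) * linForm (A i) ^ (d - 1) * C (A i j) := by
  simp [powerLinearMap, pderiv_X, pderiv_linForm, Derivation.leibniz_pow, Pi.single_apply,
    mul_assoc]

/-- The Jacobian determinant of a polynomial map. -/
def jacobian (f : n → MvPolynomial n R) : MvPolynomial n R :=
  (Matrix.of fun i j => pderiv j (f i)).det

theorem map_jacobian (φ : R →+* S) (f : n → MvPolynomial n R) :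
    map φ (jacobian f) = jacobian fun i => map φ (f i) := by
  rw [jacobian, jacobian, RingHom.map_det]
  congr 1
  ext1 i j
  simp [pderiv_map]

/-- A polynomial map is Keller if its Jacobian determinant is constant. The constant is not required
to be a unit; for the maps `powerLinearMap d A` with `2 ≤ d` it is `1`. -/
def IsKeller (f : n → MvPolynomial n R) : Prop := ∃ r, jacobian f = C r

/-- The ideal generated by the nonconstant coefficients of the Jacobian determinant, that is, the
smallest ideal modulo which `f` becomes Keller. -/
def jacobianIdeal (f : n → MvPolynomial n R) : Ideal R :=
  Ideal.span {r | ∃ α : n →₀ ℕ, α ≠ 0 ∧ coeff α (jacobian f) = r}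

theorem isKeller_map_mk_jacobianIdeal (f : n → MvPolynomial n R) :
    IsKeller fun i => map (Ideal.Quotient.mk (jacobianIdeal f)) (f i) := by
  refine ⟨Ideal.Quotient.mk _ (coeff 0 (jacobian f)), ?_⟩
  ext α
  rw [← map_jacobian, coeff_map, coeff_C]
  split_ifs with hα
  · rw [hα]
  · exact Ideal.Quotient.eq_zero_iff_mem.mpr (Ideal.subset_span ⟨α, Ne.symm hα, rfl⟩)

theorem det_mul_mul_eq_zero_of_sum_mul_mul_eq_zero {A : Matrix n n R} {c : n → R}
    (h : ∀ j k, ∑ i, c i * A i j * A i k = 0) (i j : n) : A.det * (c i * A i j) = 0 := by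
  have hA : Aᵀ * (diagonal c * A) = 0 := by
    ext j k
    rw [mul_apply, Matrix.zero_apply, ← h j k]
    refine Finset.sum_congr rfl fun i _ => ?_
    rw [transpose_apply, diagonal_mul]
    ring
  have hdet : A.det • (diagonal c * A) = 0 :=
    calc A.det • (diagonal c * A) = (A * A.adjugate)ᵀ * (diagonal c * A) := by
          simp [mul_adjugate]
      _ = A.adjugateᵀ * (Aᵀ * (diagonal c * A)) := by rw [transpose_mul, Matrix.mul_assoc]
      _ = 0 := by rw [hA, Matrix.mul_zero]
  simpa [diagonal_mul] using congrFun₂ hdet i j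

theorem C_mul_linForm_sq_eq_update {δ : R} {v : n → R} {i : n} (h : ∀ j, δ * (v i * v j) = 0) :
    C δ * linForm v ^ 2 = C δ * linForm (Function.update v i 0) ^ 2 := by
  have hupdate : linForm (Function.update v i 0) = linForm v - C (v i) * X i := by
    rw [eq_sub_iff_add_eq', linForm, linForm, ← Finset.add_sum_erase _ _ (Finset.mem_univ i),
      ← Finset.add_sum_erase _ _ (Finset.mem_univ i), Function.update_self, map_zero, zero_mul,
      zero_add]
    congr 1
    exact Finset.sum_congr rfl fun j hj => by rw [Function.update_of_ne (Finset.ne_of_mem_erase hj)]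
  have hC (j : n) : C δ * (C (v i) * C (v j)) = (0 : MvPolynomial n R) := by
    rw [← C_mul, ← C_mul, h, map_zero]
  have hform : C δ * (C (v i) * linForm v) = 0 := by
    simp only [linForm, Finset.mul_sum]
    exact Finset.sum_eq_zero fun j _ => by linear_combination X j * hC j
  rw [hupdate]
  linear_combination (2 * X i) * hform - X i ^ 2 * hC i

end General

section Ternary

variable {R : Type*} [CommRing R]

/-- The multidegree of the monomial `x ^ i * y ^ j * z ^ k` in three variables. -/
def multidegree (i j k : ℕ) : Fin 3 →₀ ℕ := Finsupp.equivFunOnFinite.symm ![i, j, k]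

theorem coeff_multidegree_linForm_mul (v : Fin 3 → R) (p : MvPolynomial (Fin 3) R) (i j k : ℕ) :
    coeff (multidegree i j k) (linForm v * p) =
      (if i = 0 then 0 else v 0 * coeff (multidegree (i - 1) j k) p) +
      (if j = 0 then 0 else v 1 * coeff (multidegree i (j - 1) k) p) +
      (if k = 0 then 0 else v 2 * coeff (multidegree i j (k - 1)) p) := by
  have h0 : multidegree i j k - Finsupp.single 0 1 = multidegree (i - 1) j k := by
    ext m; fin_cases m <;> simp [multidegree]
  have h1 : multidegree i j k - Finsupp.single 1 1 = multidegree i (j - 1) k := by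
    ext m; fin_cases m <;> simp [multidegree]
  have h2 : multidegree i j k - Finsupp.single 2 1 = multidegree i j (k - 1) := by
    ext m; fin_cases m <;> simp [multidegree]
  rw [coeff_linForm_mul, Fin.sum_univ_three, h0, h1, h2]
  simp [multidegree]

theorem coeff_multidegree_one (i j k : ℕ) :
    coeff (multidegree i j k) (1 : MvPolynomial (Fin 3) R) =
      if i = 0 ∧ j = 0 ∧ k = 0 then 1 else 0 := by
  have h : 0 = multidegree i j k ↔ i = 0 ∧ j = 0 ∧ k = 0 := by
    simp [multidegree, Finsupp.ext_iff, Fin.forall_fin_succ, eq_comm]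
  simp only [coeff_one, h]

theorem coeff_multidegree_linForm (v : Fin 3 → R) (i j k : ℕ) :
    coeff (multidegree i j k) (linForm v) =
      (if i = 1 ∧ j = 0 ∧ k = 0 then v 0 else 0) + (if i = 0 ∧ j = 1 ∧ k = 0 then v 1 else 0) +
        (if i = 0 ∧ j = 0 ∧ k = 1 then v 2 else 0) := by
  have h := coeff_multidegree_linForm_mul v 1 i j k
  simp only [mul_one, coeff_multidegree_one] at h
  rw [h]
  congr 1
  · congr 1 <;> grind
  · grind

section SqMulSq

variable (v w : Fin 3 → R)

theorem coeff_linForm_sq_mul_linForm_sq_400 :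
    coeff (multidegree 4 0 0) (linForm v ^ 2 * linForm w ^ 2) = v 0 ^ 2 * w 0 ^ 2 := by
  simp [pow_two, mul_assoc, coeff_multidegree_linForm_mul, coeff_multidegree_linForm]

theorem coeff_linForm_sq_mul_linForm_sq_310 :
    coeff (multidegree 3 1 0) (linForm v ^ 2 * linForm w ^ 2) =
      2 * (v 0 ^ 2 * w 0 * w 1 + v 0 * v 1 * w 0 ^ 2) := by
  simp [pow_two, mul_assoc, coeff_multidegree_linForm_mul, coeff_multidegree_linForm]
  ring

theorem coeff_linForm_sq_mul_linForm_sq_301 :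
    coeff (multidegree 3 0 1) (linForm v ^ 2 * linForm w ^ 2) =
      2 * (v 0 ^ 2 * w 0 * w 2 + v 0 * v 2 * w 0 ^ 2) := by
  simp [pow_two, mul_assoc, coeff_multidegree_linForm_mul, coeff_multidegree_linForm]
  ring

theorem coeff_linForm_sq_mul_linForm_sq_202 :
    coeff (multidegree 2 0 2) (linForm v ^ 2 * linForm w ^ 2) =
      v 0 ^ 2 * w 2 ^ 2 + 4 * v 0 * v 2 * w 0 * w 2 + v 2 ^ 2 * w 0 ^ 2 := by
  simp [pow_two, mul_assoc, coeff_multidegree_linForm_mul, coeff_multidegree_linForm]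
  ring

theorem coeff_linForm_sq_mul_linForm_sq_130 :
    coeff (multidegree 1 3 0) (linForm v ^ 2 * linForm w ^ 2) =
      2 * (v 0 * v 1 * w 1 ^ 2 + v 1 ^ 2 * w 0 * w 1) := by
  simp [pow_two, mul_assoc, coeff_multidegree_linForm_mul, coeff_multidegree_linForm]
  ring

end SqMulSq

theorem coeff_prod_linForm_sq_222 (b c d f g h : R) :
    coeff (multidegree 2 2 2)
        (linForm ![0, b, c] ^ 2 * linForm ![d, 0, f] ^ 2 * linForm ![g, h, 0] ^ 2) =
      (b * f * g) ^ 2 + 8 * (b * f * g) * (c * d * h) + (c * d * h) ^ 2 := by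
  simp [pow_two, mul_assoc, coeff_multidegree_linForm_mul, coeff_multidegree_linForm]
  ring

end Ternary

section CubicKeller

variable {R : Type*} [CommRing R]

/-- The quadratic form `∑ aᵢᵢ uᵢ²` in the rows `uᵢ` of `A`. -/
def traceForm (A : Matrix (Fin 3) (Fin 3) R) : MvPolynomial (Fin 3) R :=
  ∑ i, C (A i i) * linForm (A i) ^ 2

/-- The quartic form `∑ Mᵢⱼ uᵢ² uⱼ²` over the pairs of rows of `A`, where `Mᵢⱼ` is the principal
minor on `i` and `j`. It is indexed by the row `i` left out, with `i + 1` and `i + 2` taken modulo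
`3`, so that the minors are the diagonal entries of the adjugate. -/
def minorForm (A : Matrix (Fin 3) (Fin 3) R) : MvPolynomial (Fin 3) R :=
  ∑ i, C (A.adjugate i i) * (linForm (A (i + 1)) ^ 2 * linForm (A (i + 2)) ^ 2)

/-- The sextic form `det A · ∏ uᵢ²`. -/
def detForm (A : Matrix (Fin 3) (Fin 3) R) : MvPolynomial (Fin 3) R :=
  C A.det * ∏ i, linForm (A i) ^ 2

theorem isHomogeneous_traceForm (A : Matrix (Fin 3) (Fin 3) R) : (traceForm A).IsHomogeneous 2 :=
  .sum _ _ _ fun _ _ => .C_mul ((isHomogeneous_linForm _).pow 2) _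

theorem isHomogeneous_minorForm (A : Matrix (Fin 3) (Fin 3) R) : (minorForm A).IsHomogeneous 4 :=
  .sum _ _ _ fun _ _ => .C_mul
    (((isHomogeneous_linForm _).pow 2).mul ((isHomogeneous_linForm _).pow 2)) _

theorem isHomogeneous_detForm (A : Matrix (Fin 3) (Fin 3) R) : (detForm A).IsHomogeneous 6 :=
  .C_mul (.prod _ _ _ fun _ _ => (isHomogeneous_linForm _).pow 2) _

theorem jacobian_powerLinearMap_three (A : Matrix (Fin 3) (Fin 3) R) :
    jacobian (powerLinearMap 3 A) =
      C 1 - C 3 * traceForm A + C 9 * minorForm A - C 27 * detForm A := by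
  simp only [jacobian, det_fin_three, of_apply, pderiv_powerLinearMap]
  simp [traceForm, minorForm, detForm, det_fin_three, adjugate_fin_three, Fin.sum_univ_three,
    Fin.prod_univ_three, map_ofNat C]
  ring

theorem isUnit_two_of_isUnit_six (h6 : IsUnit (6 : R)) : IsUnit (2 : R) :=
  isUnit_of_mul_isUnit_left (y := 3) (by norm_num [h6])

theorem isUnit_three_of_isUnit_six (h6 : IsUnit (6 : R)) : IsUnit (3 : R) :=
  isUnit_of_mul_isUnit_right (x := 2) (by norm_num [h6])

variable {A : Matrix (Fin 3) (Fin 3) R}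

theorem forms_eq_zero_of_isKeller (h3 : IsUnit (3 : R)) (hA : IsKeller (powerLinearMap 3 A)) :
    traceForm A = 0 ∧ minorForm A = 0 ∧ detForm A = 0 := by
  obtain ⟨r, hr⟩ := hA
  have hcomp (m : ℕ) := congrArg (homogeneousComponent m) hr
  simp only [jacobian_powerLinearMap_three, map_sub, map_add, homogeneousComponent_C_mul,
    homogeneousComponent_of_mem (isHomogeneous_C _ _),
    homogeneousComponent_of_mem (isHomogeneous_traceForm A),
    homogeneousComponent_of_mem (isHomogeneous_minorForm A),
    homogeneousComponent_of_mem (isHomogeneous_detForm A)] at hcomp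
  have h9 : IsUnit (9 : R) := by convert h3.pow 2; norm_num
  have h27 : IsUnit (27 : R) := by convert h3.pow 3; norm_num
  refine ⟨?_, ?_, ?_⟩
  · simpa [(h3.map C).mul_right_eq_zero] using hcomp 2
  · simpa [(h9.map C).mul_right_eq_zero] using hcomp 4
  · simpa [(h27.map C).mul_right_eq_zero] using hcomp 6

/-- The sum over paths `1 → m → p` in which the inner vertices `m` and `p` carry the weights `x m`
and `y p` of the leaves attached to them. -/
def pathSum (A : Matrix (Fin 3) (Fin 3) R) (x y : Fin 3 → R) : R :=
  ∑ m, ∑ p, A 0 m * x m * A m p * y p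

/-- The sum `S` in `w₁ = a_{1,2}² S`, with leaf labels `3, 3` at `m` and `1, 1, 1` at `p`. -/
def fernSum (A : Matrix (Fin 3) (Fin 3) R) : R :=
  pathSum A (fun m => A m 2 ^ 2) (fun p => A p 0 ^ 3)

/-- The weight `w₁ = z(fern_{3,3}, μ)` for an arbitrary coefficient matrix. -/
def fernWeight (A : Matrix (Fin 3) (Fin 3) R) : R := A 0 1 ^ 2 * fernSum A

/-- The sum `γ` to which `fernSum` is compared, with leaf labels `1, 1` at `m` and `1, 3, 3` at
`p`. -/
def auxSum (A : Matrix (Fin 3) (Fin 3) R) : R :=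
  pathSum A (fun m => A m 0 ^ 2) (fun p => A p 0 * A p 2 ^ 2)

theorem sum_diag_mul_mul_eq_zero (h6 : IsUnit (6 : R)) (hA : IsKeller (powerLinearMap 3 A))
    (j k : Fin 3) : ∑ i, A i i * A i j * A i k = 0 :=
  sum_mul_mul_eq_zero_of_sum_sq_eq_zero (isUnit_two_of_isUnit_six h6)
    (forms_eq_zero_of_isKeller (isUnit_three_of_isUnit_six h6) hA).1 j k

theorem det_mul_diag_mul_eq_zero (h6 : IsUnit (6 : R)) (hA : IsKeller (powerLinearMap 3 A))
    (i j : Fin 3) : A.det * (A i i * A i j) = 0 :=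
  det_mul_mul_eq_zero_of_sum_mul_mul_eq_zero (sum_diag_mul_mul_eq_zero h6 hA) i j

section Entries

variable {a b c d e f g h k : R}

variable (h6 : IsUnit (6 : R)) (hM : IsKeller (powerLinearMap 3 !![a, b, c; d, e, f; g, h, k]))
include h6 hM

theorem minor_relation (α : Fin 3 →₀ ℕ) :
    (e * k - f * h) * coeff α (linForm ![d, e, f] ^ 2 * linForm ![g, h, k] ^ 2) +
      (a * k - c * g) * coeff α (linForm ![g, h, k] ^ 2 * linForm ![a, b, c] ^ 2) +
      (a * e - b * d) * coeff α (linForm ![a, b, c] ^ 2 * linForm ![d, e, f] ^ 2) = 0 := by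
  have hminor := congrArg (coeff α)
    (forms_eq_zero_of_isKeller (isUnit_three_of_isUnit_six h6) hM).2.1
  simp only [minorForm, Fin.sum_univ_three, coeff_add, coeff_C_mul, adjugate_fin_three,
    coeff_zero] at hminor
  exact hminor

theorem minor_relation_400 :
    (e * k - f * h) * (d ^ 2 * g ^ 2) + (a * k - c * g) * (a ^ 2 * g ^ 2) +
      (a * e - b * d) * (a ^ 2 * d ^ 2) = 0 := by
  have hα := minor_relation h6 hM (multidegree 4 0 0)
  simp only [coeff_linForm_sq_mul_linForm_sq_400, cons_val] at hα
  linear_combination hα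

theorem minor_relation_310 :
    (e * k - f * h) * (d ^ 2 * g * h + d * e * g ^ 2) +
      (a * k - c * g) * (a ^ 2 * g * h + a * b * g ^ 2) +
      (a * e - b * d) * (a ^ 2 * d * e + a * b * d ^ 2) = 0 := by
  have hα := minor_relation h6 hM (multidegree 3 1 0)
  simp only [coeff_linForm_sq_mul_linForm_sq_310, cons_val] at hα
  rw [← (isUnit_two_of_isUnit_six h6).mul_right_eq_zero]
  linear_combination hα

theorem minor_relation_301 :
    (e * k - f * h) * (d ^ 2 * g * k + d * f * g ^ 2) +
      (a * k - c * g) * (a ^ 2 * g * k + a * c * g ^ 2) +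
      (a * e - b * d) * (a ^ 2 * d * f + a * c * d ^ 2) = 0 := by
  have hα := minor_relation h6 hM (multidegree 3 0 1)
  simp only [coeff_linForm_sq_mul_linForm_sq_301, cons_val] at hα
  rw [← (isUnit_two_of_isUnit_six h6).mul_right_eq_zero]
  linear_combination hα

theorem minor_relation_202 :
    (e * k - f * h) * (d ^ 2 * k ^ 2 + 4 * d * f * g * k + f ^ 2 * g ^ 2) +
      (a * k - c * g) * (a ^ 2 * k ^ 2 + 4 * a * c * g * k + c ^ 2 * g ^ 2) +
      (a * e - b * d) * (a ^ 2 * f ^ 2 + 4 * a * c * d * f + c ^ 2 * d ^ 2) = 0 := by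
  have hα := minor_relation h6 hM (multidegree 2 0 2)
  simp only [coeff_linForm_sq_mul_linForm_sq_202, cons_val] at hα
  linear_combination hα

theorem minor_relation_130 :
    (e * k - f * h) * (d * e * h ^ 2 + e ^ 2 * g * h) +
      (a * k - c * g) * (a * b * h ^ 2 + b ^ 2 * g * h) +
      (a * e - b * d) * (a * b * e ^ 2 + b ^ 2 * d * e) = 0 := by
  have hα := minor_relation h6 hM (multidegree 1 3 0)
  simp only [coeff_linForm_sq_mul_linForm_sq_130, cons_val] at hα
  rw [← (isUnit_two_of_isUnit_six h6).mul_right_eq_zero]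
  linear_combination hα

theorem diag_relation_00 : a ^ 3 + d ^ 2 * e + g ^ 2 * k = 0 := by
  have h00 : a * a * a + e * d * d + k * g * g = 0 := by
    simpa [Fin.sum_univ_three] using sum_diag_mul_mul_eq_zero h6 hM 0 0
  linear_combination h00

theorem diag_relation_01 : a ^ 2 * b + d * e ^ 2 + g * h * k = 0 := by
  have h01 : a * a * b + e * d * e + k * g * h = 0 := by
    simpa [Fin.sum_univ_three] using sum_diag_mul_mul_eq_zero h6 hM 0 1
  linear_combination h01

theorem diag_relation_02 : a ^ 2 * c + d * e * f + g * k ^ 2 = 0 := by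
  have h02 : a * a * c + e * d * f + k * g * k = 0 := by
    simpa [Fin.sum_univ_three] using sum_diag_mul_mul_eq_zero h6 hM 0 2
  linear_combination h02

theorem diag_relation_22 : a * c ^ 2 + e * f ^ 2 + k ^ 3 = 0 := by
  have h22 : a * c * c + e * f * f + k * k * k = 0 := by
    simpa [Fin.sum_univ_three] using sum_diag_mul_mul_eq_zero h6 hM 2 2
  linear_combination h22

theorem fernSum_eq_three_mul_auxSum_add :
    fernSum !![a, b, c; d, e, f; g, h, k] =
      3 * auxSum !![a, b, c; d, e, f; g, h, k] +
        det !![a, b, c; d, e, f; g, h, k] * (f ^ 2 * g ^ 2) := by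
  have hdet20 : det !![a, b, c; d, e, f; g, h, k] * (k * g) = 0 :=
    det_mul_diag_mul_eq_zero h6 hM 2 0
  have hdet22 : det !![a, b, c; d, e, f; g, h, k] * (k * k) = 0 :=
    det_mul_diag_mul_eq_zero h6 hM 2 2
  simp only [fernSum, auxSum, pathSum, Fin.sum_univ_three, det_fin_three, of_apply,
    cons_val] at hdet20 hdet22 ⊢
  linear_combination 4 * d * f * hdet20 + d ^ 2 * hdet22
    + (c * g ^ 3 + b * d ^ 3 + a ^ 4) * diag_relation_22 h6 hM
    - 3 * (c * g * k ^ 2 + b * d * f ^ 2 + a ^ 2 * c ^ 2) * diag_relation_00 h6 hM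
    - a * minor_relation_202 h6 hM + 4 * c * minor_relation_301 h6 hM

theorem mul_auxSum_eq_zero : g * auxSum !![a, b, c; d, e, f; g, h, k] = 0 := by
  have hdet20 : det !![a, b, c; d, e, f; g, h, k] * (k * g) = 0 :=
    det_mul_diag_mul_eq_zero h6 hM 2 0
  simp only [auxSum, pathSum, Fin.sum_univ_three, det_fin_three, of_apply, cons_val] at hdet20 ⊢
  linear_combination -d * f * g * hdet20 + (a * k - c * g) * minor_relation_301 h6 hM
    - c * k * minor_relation_400 h6 hM
    + (c * g - a * k) * (a ^ 3 + d ^ 2 * e) * diag_relation_02 h6 hM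
    + (a * k - c * g) * d ^ 2 * f * diag_relation_01 h6 hM
    + (c * g ^ 2 * k ^ 2 + b * d * f ^ 2 * g + a ^ 3 * c * k) * diag_relation_00 h6 hM

theorem sq_mul_auxSum_eq_zero : d ^ 2 * auxSum !![a, b, c; d, e, f; g, h, k] = 0 := by
  have hdet20 : det !![a, b, c; d, e, f; g, h, k] * (k * g) = 0 :=
    det_mul_diag_mul_eq_zero h6 hM 2 0
  simp only [auxSum, pathSum, Fin.sum_univ_three, det_fin_three, of_apply, cons_val] at hdet20 ⊢
  linear_combination -d ^ 3 * f * hdet20 + (a * d * f - c * d ^ 2) * minor_relation_301 h6 hM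
    - a * f ^ 2 * minor_relation_400 h6 hM
    + a * g * (d ^ 2 * k ^ 2 - f ^ 2 * g ^ 2) * diag_relation_02 h6 hM
    + a * d * g ^ 2 * (f * g - d * k) * diag_relation_22 h6 hM
    + (c * d ^ 2 * g * k ^ 2 + b * d ^ 3 * f ^ 2 - a * d * f * g * k ^ 2 + a * f ^ 2 * g ^ 2 * k
      + a ^ 2 * c ^ 2 * d ^ 2) * diag_relation_00 h6 hM

theorem auxSum_eq_sq_mul_add_mul :
    auxSum !![a, b, c; d, e, f; g, h, k] =
      d ^ 2 * (g * k ^ 2 * (b * f - c * e) - a * c ^ 2 * (a * e - b * d)) +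
      g * (d * f ^ 2 * g * (c * h - b * k) - a * c ^ 2 * g * (a * k - c * g)) := by
  simp only [auxSum, pathSum, Fin.sum_univ_three, of_apply, cons_val]
  linear_combination
    (c * g * k ^ 2 + b * d * f ^ 2 + a ^ 2 * c ^ 2) * diag_relation_00 h6 hM

theorem auxSum_sq_eq_zero : auxSum !![a, b, c; d, e, f; g, h, k] ^ 2 = 0 := by
  linear_combination auxSum !![a, b, c; d, e, f; g, h, k] * auxSum_eq_sq_mul_add_mul h6 hM
    + (g * k ^ 2 * (b * f - c * e) - a * c ^ 2 * (a * e - b * d)) * sq_mul_auxSum_eq_zero h6 hM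
    + (d * f ^ 2 * g * (c * h - b * k) - a * c ^ 2 * g * (a * k - c * g)) *
      mul_auxSum_eq_zero h6 hM

-- Only one product of off-diagonal entries survives in `det A` times the minor relation.
theorem det_mul_sq_mul_eq_zero :
    det !![a, b, c; d, e, f; g, h, k] * ((b * f * g) ^ 2 * (c * d * h)) = 0 := by
  have hdet01 : det !![a, b, c; d, e, f; g, h, k] * (a * b) = 0 :=
    det_mul_diag_mul_eq_zero h6 hM 0 1
  have hdet10 : det !![a, b, c; d, e, f; g, h, k] * (e * d) = 0 :=
    det_mul_diag_mul_eq_zero h6 hM 1 0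
  have hdet11 : det !![a, b, c; d, e, f; g, h, k] * (e * e) = 0 :=
    det_mul_diag_mul_eq_zero h6 hM 1 1
  linear_combination d * f ^ 2 * (-det !![a, b, c; d, e, f; g, h, k] * minor_relation_130 h6 hM
    + ((a * k - c * g) * h ^ 2 + (a * e - b * d) * e ^ 2 + b * g * h * k) * hdet01
    + ((e * k - f * h) * h ^ 2 + (a * e - b * d) * b ^ 2) * hdet10
    + (e * k - f * h) * g * h * hdet11)

theorem det_mul_mul_sq_eq_zero :
    det !![a, b, c; d, e, f; g, h, k] * ((b * f * g) * (c * d * h) ^ 2) = 0 := by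
  have hdet00 : det !![a, b, c; d, e, f; g, h, k] * (a * a) = 0 :=
    det_mul_diag_mul_eq_zero h6 hM 0 0
  have hdet01 : det !![a, b, c; d, e, f; g, h, k] * (a * b) = 0 :=
    det_mul_diag_mul_eq_zero h6 hM 0 1
  have hdet10 : det !![a, b, c; d, e, f; g, h, k] * (e * d) = 0 :=
    det_mul_diag_mul_eq_zero h6 hM 1 0
  linear_combination b * c ^ 2 * (-det !![a, b, c; d, e, f; g, h, k] * minor_relation_310 h6 hM
    + (d * g * h * k + (e * k - f * h) * g ^ 2) * hdet10
    + ((a * k - c * g) * g * h + (a * e - b * d) * d * e) * hdet00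
    + ((a * k - c * g) * g ^ 2 + (a * e - b * d) * d ^ 2) * hdet01)

theorem det_mul_sq_add_eq_zero :
    det !![a, b, c; d, e, f; g, h, k] *
      ((b * f * g) ^ 2 + 8 * (b * f * g) * (c * d * h) + (c * d * h) ^ 2) = 0 := by
  set Δ := det !![a, b, c; d, e, f; g, h, k]
  have hrow (i : Fin 3) {v w : Fin 3 → R} (hv : !![a, b, c; d, e, f; g, h, k] i = v)
      (hw : Function.update v i 0 = w) : C Δ * linForm v ^ 2 = C Δ * linForm w ^ 2 :=
    hw ▸ C_mul_linForm_sq_eq_update (hv ▸ det_mul_diag_mul_eq_zero h6 hM i)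
  have h0 : C Δ * linForm ![a, b, c] ^ 2 = C Δ * linForm ![0, b, c] ^ 2 :=
    hrow 0 rfl (by ext j; fin_cases j <;> rfl)
  have h1 : C Δ * linForm ![d, e, f] ^ 2 = C Δ * linForm ![d, 0, f] ^ 2 :=
    hrow 1 rfl (by ext j; fin_cases j <;> rfl)
  have h2 : C Δ * linForm ![g, h, k] ^ 2 = C Δ * linForm ![g, h, 0] ^ 2 :=
    hrow 2 rfl (by ext j; fin_cases j <;> rfl)
  have hdet : C Δ * (linForm ![a, b, c] ^ 2 * linForm ![d, e, f] ^ 2 *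
      linForm ![g, h, k] ^ 2) = 0 := by
    have hform := (forms_eq_zero_of_isKeller (isUnit_three_of_isUnit_six h6) hM).2.2
    rw [detForm, Fin.prod_univ_three] at hform
    exact hform
  have hoff : C Δ * (linForm ![0, b, c] ^ 2 * linForm ![d, 0, f] ^ 2 *
      linForm ![g, h, 0] ^ 2) = 0 := by
    linear_combination hdet - linForm ![d, e, f] ^ 2 * linForm ![g, h, k] ^ 2 * h0
      - linForm ![0, b, c] ^ 2 * linForm ![g, h, k] ^ 2 * h1
      - linForm ![0, b, c] ^ 2 * linForm ![d, 0, f] ^ 2 * h2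
  rw [← coeff_prod_linForm_sq_222, ← coeff_C_mul, hoff, coeff_zero]

theorem det_mul_cube_eq_zero : det !![a, b, c; d, e, f; g, h, k] * (b * f * g) ^ 3 = 0 := by
  linear_combination b * f * g * det_mul_sq_add_eq_zero h6 hM
    - 8 * det_mul_sq_mul_eq_zero h6 hM - det_mul_mul_sq_eq_zero h6 hM

end Entries

theorem fernWeight_sq_eq_zero (h6 : IsUnit (6 : R)) (hA : IsKeller (powerLinearMap 3 A)) :
    fernWeight A ^ 2 = 0 := by
  obtain ⟨a, b, c, d, e, f, g, h, k, rfl⟩ :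
      ∃ a b c d e f g h k, A = !![a, b, c; d, e, f; g, h, k] :=
    ⟨_, _, _, _, _, _, _, _, _, eta_fin_three A⟩
  rw [fernWeight, fernSum_eq_three_mul_auxSum_add h6 hA]
  simp only [of_apply, cons_val]
  set Δ := det !![a, b, c; d, e, f; g, h, k]
  linear_combination 9 * b ^ 4 * auxSum_sq_eq_zero h6 hA
    + 6 * b ^ 4 * Δ * f ^ 2 * g * mul_auxSum_eq_zero h6 hA
    + Δ * (b * f * g) * det_mul_cube_eq_zero h6 hA

end CubicKeller

theorem map_fernWeight {R S : Type*} [CommRing R] [CommRing S] (φ : R →+* S)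
    (A : Matrix (Fin 3) (Fin 3) R) : φ (fernWeight A) = fernWeight (A.map φ) := by
  simp [fernWeight, fernSum, pathSum]

end PowerLinear

open PowerLinear

theorem stmt16_general {R : Type*} [CommRing R] (h6 : IsUnit (6 : R))
    (A : Matrix (Fin 3) (Fin 3) R) :
    fernWeight A ^ 2 ∈ jacobianIdeal (powerLinearMap 3 A) ∧
      fernWeight A ∈ (jacobianIdeal (powerLinearMap 3 A)).radical := by
  let π := Ideal.Quotient.mk (jacobianIdeal (powerLinearMap 3 A))
  have hKeller : IsKeller (powerLinearMap 3 (A.map π)) := by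
    simpa only [map_powerLinearMap] using isKeller_map_mk_jacobianIdeal (powerLinearMap 3 A)
  have hmem : fernWeight A ^ 2 ∈ jacobianIdeal (powerLinearMap 3 A) := by
    rw [← Ideal.Quotient.eq_zero_iff_mem, map_pow, map_fernWeight]
    exact fernWeight_sq_eq_zero (by simpa only [map_ofNat] using h6.map π) hKeller
  exact ⟨hmem, 2, hmem⟩

/-- `w₁² ∈ J_{3,3}`; in particular `w₁` lies in the radical of `J_{3,3}`. -/
theorem stmt16 : wOne ^ 2 ∈ Jideal33 ∧ wOne ∈ Jideal33.radical :=
  stmt16_general ((IsUnit.mk0 (6 : ℚ) (by norm_num)).map (algebraMap ℚ JacR3))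
    (mvPolynomialX (Fin 3) (Fin 3) ℚ)
end
end
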